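/- Let I ∈ Ins(Ω,H,K) be an instrument and B ∈ O(Λ,H) a POVM. Then I is compatible with B if and only if I is compatible with J^B for any (equivalently, every) measure-and-prepare instrument J^B ∈ Ins(Λ,H,V) that measures B, i.e. J^B_y(ρ) = tr[B(y)ρ] ξ_y for some states ξ_y ∈ S(V). -/

import Mathlib

open scoped Kronecker ComplexOrder
open Matrix

noncomputable section

/-- Linear maps between matrix algebras, representing super-operators
`L(H) → L(K)` for finite-dimensional Hilbert spaces with index types `dH`, `dK`. -/
abbrev MatMap (dH dK : Type) : Type := Matrix dH dH ℂ →ₗ[ℂ] Matrix dK dK ℂ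

variable {Ω Λ dH dK dV dA dA' : Type}

/-- The Choi matrix of a super-operator. -/
def choiMatrix [DecidableEq dH] (Φ : MatMap dH dK) : Matrix (dH × dK) (dH × dK) ℂ :=
  fun p q => Φ (single p.1 q.1 1) p.2 q.2

/-- Complete positivity of a super-operator (positivity of its Choi matrix). -/
def IsCP [Fintype dH] [DecidableEq dH] [Fintype dK] (Φ : MatMap dH dK) : Prop :=
  (choiMatrix Φ).PosSemidef

/-- A quantum state: a positive semidefinite matrix of unit trace. -/
def IsState [Fintype dH] (ρ : Matrix dH dH ℂ) : Prop := ρ.PosSemidef ∧ ρ.trace = 1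

/-- Trace-nonincreasing super-operator. -/
def IsTNI [Fintype dH] [Fintype dK] (Φ : MatMap dH dK) : Prop :=
  ∀ ρ : Matrix dH dH ℂ, ρ.PosSemidef → (Φ ρ).trace ≤ ρ.trace

/-- Trace-preserving super-operator. -/
def IsTP [Fintype dH] [Fintype dK] (Φ : MatMap dH dK) : Prop :=
  ∀ ρ : Matrix dH dH ℂ, (Φ ρ).trace = ρ.trace

/-- A quantum instrument with outcome set `Ω` from system `dH` to system `dK`:
a family of completely positive trace-nonincreasing maps summing to a channel. -/
structure Instrument (Ω dH dK : Type) [Fintype Ω] [Fintype dH] [DecidableEq dH]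
    [Fintype dK] : Type where
  op : Ω → MatMap dH dK
  cp : ∀ x, IsCP (op x)
  tni : ∀ x, IsTNI (op x)
  tp : IsTP (∑ x, op x)

/-- A quantum channel: a completely positive trace-preserving super-operator. -/
structure Channel (dH dK : Type) [Fintype dH] [DecidableEq dH] [Fintype dK] : Type where
  map : MatMap dH dK
  cp : IsCP map
  tp : IsTP map

/-- A POVM with outcome set `Ω` on system `d`. -/
structure POVM (Ω d : Type) [Fintype Ω] [Fintype d] [DecidableEq d] : Type where
  elem : Ω → Matrix d d ℂ
  pos : ∀ x, (elem x).PosSemidef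
  sum_eq : ∑ x, elem x = 1

/-- The effect (induced POVM element) of an operation `Φ`:
the unique matrix `A` with `tr[A ρ] = tr[Φ ρ]` for all `ρ`. -/
def dualId [Fintype dH] [DecidableEq dH] [Fintype dK] (Φ : MatMap dH dK) :
    Matrix dH dH ℂ :=
  fun i j => (Φ (single j i 1)).trace

/-- Partial trace over the first tensor factor. -/
def ptraceL [Fintype dA] (M : Matrix (dA × dK) (dA × dK) ℂ) : Matrix dK dK ℂ :=
  fun i j => ∑ a, M (a, i) (a, j)

/-- Partial trace over the second tensor factor. -/
def ptraceR [Fintype dV] (M : Matrix (dK × dV) (dK × dV) ℂ) : Matrix dK dK ℂ :=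
  fun i j => ∑ b, M (i, b) (j, b)

/-- Compatibility of two instruments: existence of a joint instrument whose
partial-trace marginals (summed over the other outcome) reproduce both instruments
on all states. -/
def InsCompatible [Fintype Ω] [Fintype Λ] [Fintype dH] [DecidableEq dH] [Fintype dK]
    [Fintype dV] (I : Instrument Ω dH dK) (J : Instrument Λ dH dV) : Prop :=
  ∃ G : Instrument (Ω × Λ) dH (dK × dV),
    (∀ y, ∀ ρ : Matrix dH dH ℂ, IsState ρ → ∑ x, ptraceL (G.op (x, y) ρ) = J.op y ρ) ∧
    (∀ x, ∀ ρ : Matrix dH dH ℂ, IsState ρ → ∑ y, ptraceR (G.op (x, y) ρ) = I.op x ρ)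

/-- Compatibility of an instrument and a channel (a one-outcome instrument). -/
def InsChCompatible [Fintype Ω] [Fintype dH] [DecidableEq dH] [Fintype dK] [Fintype dV]
    (I : Instrument Ω dH dK) (Ψ : Channel dH dV) : Prop :=
  ∃ G : Instrument Ω dH (dK × dV),
    (∀ ρ : Matrix dH dH ℂ, IsState ρ → ∑ x, ptraceL (G.op x ρ) = Ψ.map ρ) ∧
    (∀ x, ∀ ρ : Matrix dH dH ℂ, IsState ρ → ptraceR (G.op x ρ) = I.op x ρ)

/-- Compatibility of two channels. -/
def ChCompatible [Fintype dH] [DecidableEq dH] [Fintype dK] [Fintype dV]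
    (Φ : Channel dH dK) (Ψ : Channel dH dV) : Prop :=
  ∃ Γ : Channel dH (dK × dV),
    (∀ ρ : Matrix dH dH ℂ, IsState ρ → ptraceL (Γ.map ρ) = Ψ.map ρ) ∧
    (∀ ρ : Matrix dH dH ℂ, IsState ρ → ptraceR (Γ.map ρ) = Φ.map ρ)

/-- Compatibility of a POVM and an instrument: existence of a joint instrument `G`
with `∑ x, G.op (x, y) = J.op y` and whose induced POVM has the POVM `A` as a margin. -/
def POVMInsCompatible [Fintype Ω] [Fintype Λ] [Fintype dH] [DecidableEq dH] [Fintype dK]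
    (A : POVM Ω dH) (J : Instrument Λ dH dK) : Prop :=
  ∃ G : Instrument (Ω × Λ) dH dK,
    (∀ y, ∑ x, G.op (x, y) = J.op y) ∧
    (∀ x, ∑ y, dualId (G.op (x, y)) = A.elem x)

/-- Compatibility (joint measurability) of two POVMs. -/
def POVMCompatible [Fintype Ω] [Fintype Λ] [Fintype dH] [DecidableEq dH]
    (A : POVM Ω dH) (B : POVM Λ dH) : Prop :=
  ∃ G : POVM (Ω × Λ) dH,
    (∀ y, ∑ x, G.elem (x, y) = B.elem y) ∧
    (∀ x, ∑ y, G.elem (x, y) = A.elem x)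

/-- Compatibility of a POVM and a channel: existence of an instrument implementing both. -/
def POVMChCompatible [Fintype Ω] [Fintype dH] [DecidableEq dH] [Fintype dK]
    (A : POVM Ω dH) (Ψ : Channel dH dK) : Prop :=
  ∃ G : Instrument Ω dH dK,
    (∑ x, G.op x) = Ψ.map ∧ ∀ x, dualId (G.op x) = A.elem x

/-- Instrument postprocessing: `I ⪯ J` if `I_x = ∑ y, R^(y)_x ∘ J_y` for
a family of instruments `R^(y)`. -/
def Postprocessed [Fintype Ω] [Fintype Λ] [Fintype dH] [DecidableEq dH] [Fintype dK]
    [Fintype dV] [DecidableEq dV] (I : Instrument Ω dH dK) (J : Instrument Λ dH dV) : Prop :=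
  ∃ R : Λ → Instrument Ω dV dK, ∀ x, I.op x = ∑ y, (R y).op x ∘ₗ J.op y

/-- An instrument `I` does not disturb an instrument `J`: `J_y ∘ Φ^I = J_y`. -/
def NonDisturbs [Fintype Ω] [Fintype Λ] [Fintype dH] [DecidableEq dH] [Fintype dV]
    (I : Instrument Ω dH dH) (J : Instrument Λ dH dV) : Prop :=
  ∀ y, J.op y ∘ₗ (∑ x, I.op x) = J.op y

/-- An instrument `I` does not disturb a channel `Ψ`: `Ψ ∘ Φ^I = Ψ`. -/
def InsNonDisturbsCh [Fintype Ω] [Fintype dH] [DecidableEq dH] [Fintype dV]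
    (I : Instrument Ω dH dH) (Ψ : Channel dH dV) : Prop :=
  Ψ.map ∘ₗ (∑ x, I.op x) = Ψ.map

/-- An instrument `I` does not disturb a POVM `A`:
the statistics of `A` are unchanged by the channel induced by `I`. -/
def InsNonDisturbsPOVM [Fintype Ω] [Fintype Λ] [Fintype dH] [DecidableEq dH]
    (I : Instrument Ω dH dH) (A : POVM Λ dH) : Prop :=
  ∀ y, ∀ ρ : Matrix dH dH ℂ,
    (A.elem y * ((∑ x, I.op x) ρ)).trace = (A.elem y * ρ).trace

/-- A POVM `A` does not disturb an instrument `J`: some instrument measuring `A`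
does not disturb `J`. -/
def POVMNonDisturbs [Fintype Ω] [Fintype Λ] [Fintype dH] [DecidableEq dH] [Fintype dV]
    (A : POVM Ω dH) (J : Instrument Λ dH dV) : Prop :=
  ∃ I : Instrument Ω dH dH, (∀ x, dualId (I.op x) = A.elem x) ∧ NonDisturbs I J

/-- A POVM `A` does not disturb a channel `Ψ`. -/
def POVMNonDisturbsCh [Fintype Ω] [Fintype dH] [DecidableEq dH] [Fintype dV]
    (A : POVM Ω dH) (Ψ : Channel dH dV) : Prop :=
  ∃ I : Instrument Ω dH dH, (∀ x, dualId (I.op x) = A.elem x) ∧ InsNonDisturbsCh I Ψ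

/-- A POVM `A` does not disturb a POVM `B`. -/
def POVMNonDisturbsPOVM [Fintype Ω] [Fintype Λ] [Fintype dH] [DecidableEq dH]
    (A : POVM Ω dH) (B : POVM Λ dH) : Prop :=
  ∃ I : Instrument Ω dH dH, (∀ x, dualId (I.op x) = A.elem x) ∧ InsNonDisturbsPOVM I B

/-- A sharp (projection-valued) POVM. -/
def IsSharp [Fintype Ω] [Fintype dH] [DecidableEq dH] (A : POVM Ω dH) : Prop :=
  ∀ x, A.elem x * A.elem x = A.elem x

/-- `(H_A, W, E)` is a dilation of the instrument `I`:
`W` is an isometry `H → H_A ⊗ K` and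
`I_x(ρ) = Tr_{H_A}[W ρ W* (E(x) ⊗ 1_K)]` on all states. -/
def IsDilation [Fintype Ω] [Fintype dH] [DecidableEq dH] [Fintype dK] [DecidableEq dK]
    [Fintype dA] [DecidableEq dA] (I : Instrument Ω dH dK)
    (W : Matrix (dA × dK) dH ℂ) (E : POVM Ω dA) : Prop :=
  Wᴴ * W = 1 ∧
  ∀ x, ∀ ρ : Matrix dH dH ℂ, IsState ρ →
    I.op x ρ = ptraceL (W * ρ * Wᴴ * (E.elem x ⊗ₖ (1 : Matrix dK dK ℂ)))

/-- Minimality of a Stinespring isometry `W : H → H_A ⊗ K`: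
the span of `{(1 ⊗ B) W φ}` is everything. -/
def IsMinimalW [Fintype dH] [Fintype dK] [DecidableEq dK] [Fintype dA] [DecidableEq dA]
    (W : Matrix (dA × dK) dH ℂ) : Prop :=
  Submodule.span ℂ {v : (dA × dK) → ℂ |
    ∃ (B : Matrix dK dK ℂ) (φ : dH → ℂ),
      v = ((1 : Matrix dA dA ℂ) ⊗ₖ B) *ᵥ (W *ᵥ φ)} = ⊤

open scoped MatrixOrder in
/-- `IC` is the complementary instrument of the instrument dilated by `(W, E)`:
`IC_x(ρ) = Tr_K[(√E(x) ⊗ 1) W ρ W* (√E(x) ⊗ 1)]`. -/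
def IsComplementaryOf [Fintype Ω] [Fintype dH] [DecidableEq dH] [Fintype dK]
    [DecidableEq dK] [Fintype dA] [DecidableEq dA] (W : Matrix (dA × dK) dH ℂ) (E : POVM Ω dA)
    (IC : Instrument Ω dH dA) : Prop :=
  ∀ x, ∀ ρ : Matrix dH dH ℂ,
    IC.op x ρ =
      ptraceR ((CFC.sqrt (E.elem x) ⊗ₖ (1 : Matrix dK dK ℂ)) * (W * ρ * Wᴴ) *
        (CFC.sqrt (E.elem x) ⊗ₖ (1 : Matrix dK dK ℂ)))

/-- A measure-and-prepare instrument: `I_x(ρ) = tr[A(x) ρ] ξ_x`. -/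
def IsMeasureAndPrepare [Fintype Ω] [Fintype dH] [DecidableEq dH] [Fintype dK]
    [DecidableEq dK] (I : Instrument Ω dH dK) : Prop :=
  ∃ (A : POVM Ω dH) (ξ : Ω → Matrix dK dK ℂ),
    (∀ x, IsState (ξ x)) ∧
    ∀ x, ∀ ρ : Matrix dH dH ℂ, I.op x ρ = ((A.elem x * ρ).trace) • ξ x

/-- A pure state: a state which is a (rank-one) projection. -/
def IsPureState [Fintype dK] (ρ : Matrix dK dK ℂ) : Prop :=
  IsState ρ ∧ ρ * ρ = ρ

/-- A rank-1 POVM: every effect has rank at most one. -/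
def IsRankOnePOVM [Fintype Ω] [Fintype dH] [DecidableEq dH] (A : POVM Ω dH) : Prop :=
  ∀ x, (A.elem x).rank ≤ 1

/-- POVM postprocessing: `B(y) = ∑ x, ν x y • A(x)` for a stochastic matrix `ν`. -/
def POVMPostprocessed [Fintype Ω] [Fintype Λ] [Fintype dH] [DecidableEq dH]
    (B : POVM Λ dH) (A : POVM Ω dH) : Prop :=
  ∃ ν : Ω → Λ → ℝ, (∀ x y, 0 ≤ ν x y) ∧ (∀ x, ∑ y, ν x y = 1) ∧
    ∀ y, B.elem y = ∑ x, (ν x y : ℂ) • A.elem x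

/-- A measure-and-prepare instrument preparing pure states. -/
def IsMeasureAndPreparePure [Fintype Ω] [Fintype dH] [DecidableEq dH] [Fintype dK]
    [DecidableEq dK] (I : Instrument Ω dH dK) : Prop :=
  ∃ (A : POVM Ω dH) (ξ : Ω → Matrix dK dK ℂ),
    (∀ x, IsPureState (ξ x)) ∧
    ∀ x, ∀ ρ : Matrix dH dH ℂ, I.op x ρ = ((A.elem x * ρ).trace) • ξ x

/-- Two linear maps that agree on states are equal. -/
theorem matMap_eq_of_states {d : Type} {E : Type*} [AddCommGroup E] [Module ℂ E]
    [Fintype d] [DecidableEq d]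
    (f g : Matrix d d ℂ →ₗ[ℂ] E) (h : ∀ ρ : Matrix d d ℂ, IsState ρ → f ρ = g ρ) : f = g := by
  have hpos : ∀ M : Matrix d d ℂ, M.PosSemidef → f M = g M := by
    intro M hM
    by_cases ht : M.trace = 0
    · rw [hM.trace_eq_zero_iff] at ht
      simp [ht]
    · have hs : IsState (M.trace⁻¹ • M) := by
        refine ⟨hM.smul (inv_nonneg.mpr hM.trace_nonneg), ?_⟩
        rw [trace_smul, smul_eq_mul, inv_mul_cancel₀ ht]
      have h1 := h _ hs
      rw [map_smul, map_smul] at h1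
      exact smul_right_injective E (inv_ne_zero ht) h1
  have hvec : ∀ v : d → ℂ, f (vecMulVec v (star v)) = g (vecMulVec v (star v)) :=
    fun v => hpos _ (posSemidef_vecMulVec_self_star v)
  have hpol : ∀ v w : d → ℂ, vecMulVec v (star w) =
      (1/4 : ℂ) • (vecMulVec (v + w) (star (v + w)) - vecMulVec (v - w) (star (v - w))
        + Complex.I • vecMulVec (v + Complex.I • w) (star (v + Complex.I • w))
        - Complex.I • vecMulVec (v - Complex.I • w) (star (v - Complex.I • w))) := by
    intro v w
    ext i j
    simp [vecMulVec_apply]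
    ring_nf
    simp [Complex.I_sq]
    ring
  refine LinearMap.ext fun M => ?_
  rw [matrix_eq_sum_single M]
  simp only [map_sum]
  refine Finset.sum_congr rfl fun i _ => Finset.sum_congr rfl fun j _ => ?_
  have hs : single i j (M i j) = M i j • vecMulVec (Pi.single i (1:ℂ)) (star (Pi.single j (1:ℂ))) := by
    ext a b
    simp [vecMulVec_apply, single_apply, Pi.single_apply, ite_and, eq_comm]
    split_ifs <;> rfl
  rw [hs, hpol]
  simp only [map_smul, map_sub, map_add, hvec]

/-- `tr[A^Φ ρ] = tr[Φ ρ]`. -/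
theorem trace_dualId_mul [Fintype dH] [DecidableEq dH] [Fintype dK] (Φ : MatMap dH dK)
    (ρ : Matrix dH dH ℂ) : (dualId Φ * ρ).trace = (Φ ρ).trace := by
  conv_rhs => rw [matrix_eq_sum_single ρ]
  have hs : ∀ i j, single i j (ρ i j) = ρ i j • single i j (1 : ℂ) := by
    intro i j; simp
  simp only [map_sum, trace_sum, hs, map_smul, trace_smul, smul_eq_mul]
  rw [Finset.sum_comm]
  simp only [trace, Matrix.diag, mul_apply, dualId]
  exact Finset.sum_congr rfl fun i _ => Finset.sum_congr rfl fun j _ => mul_comm _ _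

theorem trace_ptraceR [Fintype dK] [Fintype dV] (M : Matrix (dK × dV) (dK × dV) ℂ) :
    (ptraceR M).trace = M.trace := by
  simp [trace, ptraceR, Fintype.sum_prod_type]

theorem trace_ptraceL [Fintype dK] [Fintype dV] (M : Matrix (dK × dV) (dK × dV) ℂ) :
    (ptraceL M).trace = M.trace := by
  simp only [trace, ptraceL, Fintype.sum_prod_type, Matrix.diag]
  rw [Finset.sum_comm]

theorem ptraceR_kronecker [Fintype dV] (M : Matrix dK dK ℂ) (N : Matrix dV dV ℂ) :
    ptraceR (M ⊗ₖ N) = N.trace • M := by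
  ext i j
  simp [ptraceR, trace, ← Finset.mul_sum, mul_comm]

theorem ptraceL_kronecker [Fintype dK] (M : Matrix dK dK ℂ) (N : Matrix dV dV ℂ) :
    ptraceL (M ⊗ₖ N) = M.trace • N := by
  ext i j
  simp [ptraceL, trace, ← Finset.sum_mul]

/-- The partial trace over the second factor as a linear map. -/
def ptraceRLin [Fintype dV] : Matrix (dK × dV) (dK × dV) ℂ →ₗ[ℂ] Matrix dK dK ℂ where
  toFun := ptraceR
  map_add' M N := by ext i j; simp [ptraceR, Finset.sum_add_distrib]
  map_smul' c M := by ext i j; simp [ptraceR, Finset.mul_sum]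

/-- The partial trace over the first factor as a linear map. -/
def ptraceLLin [Fintype dK] : Matrix (dK × dV) (dK × dV) ℂ →ₗ[ℂ] Matrix dV dV ℂ where
  toFun := ptraceL
  map_add' M N := by ext i j; simp [ptraceL, Finset.sum_add_distrib]
  map_smul' c M := by ext i j; simp [ptraceL, Finset.mul_sum]

/-- The map `ρ ↦ Φ(ρ) ⊗ ξ`. -/
def appendState (Φ : MatMap dH dK) (ξ : Matrix dV dV ℂ) : MatMap dH (dK × dV) where
  toFun ρ := Φ ρ ⊗ₖ ξ
  map_add' M N := by rw [map_add, add_kronecker]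
  map_smul' c M := by rw [map_smul, smul_kronecker]; rfl

theorem isCP_appendState [Fintype dH] [DecidableEq dH] [Fintype dK] [Fintype dV]
    (Φ : MatMap dH dK) (ξ : Matrix dV dV ℂ) (hΦ : IsCP Φ) (hξ : ξ.PosSemidef) :
    IsCP (appendState Φ ξ) := by
  classical
  have h := (Matrix.PosSemidef.kronecker hΦ hξ).submatrix
    (fun p : dH × (dK × dV) => ((p.1, p.2.1), p.2.2))
  exact h

theorem isCP_ptraceR [Fintype dH] [DecidableEq dH] [Fintype dK] [Fintype dV]
    (Φ : MatMap dH (dK × dV)) (hΦ : IsCP Φ) : IsCP (ptraceRLin ∘ₗ Φ) := by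
  have h : choiMatrix (ptraceRLin ∘ₗ Φ) =
      ∑ b : dV, (choiMatrix Φ).submatrix (fun p : dH × dK => (p.1, (p.2, b)))
        (fun p : dH × dK => (p.1, (p.2, b))) := by
    ext p q
    simp [choiMatrix, ptraceRLin, ptraceR, Matrix.sum_apply]
  unfold IsCP
  rw [h]
  exact posSemidef_sum _ fun b _ => Matrix.PosSemidef.submatrix hΦ _

/-- An instrument `I` is compatible with a POVM `B` if and only if `I` is
compatible with any measure-and-prepare instrument `J` that measures `B`
(`J_y(ρ) = tr[B(y)ρ] ξ_y` for states `ξ_y`). -/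
theorem compatible_with_povm_iff_compatible_with_map_instrument
    [Fintype Ω] [Fintype Λ] [Fintype dH] [DecidableEq dH] [Fintype dK] [Fintype dV]
    (I : Instrument Ω dH dK) (B : POVM Λ dH)
    (J : Instrument Λ dH dV)
    (ξ : Λ → Matrix dV dV ℂ) (hξ : ∀ y, IsState (ξ y))
    (hJ : ∀ y, ∀ ρ : Matrix dH dH ℂ, J.op y ρ = ((B.elem y * ρ).trace) • ξ y) :
    POVMInsCompatible B I ↔ InsCompatible I J := by
  constructor
  · rintro ⟨G, hG1, hG2⟩
    have htr : ∀ x y ρ, (appendState (G.op (y, x)) (ξ y) ρ).trace = (G.op (y, x) ρ).trace := by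
      intro x y ρ
      change (G.op (y, x) ρ ⊗ₖ ξ y).trace = _
      rw [trace_kronecker, (hξ y).2, mul_one]
    refine ⟨⟨fun p => appendState (G.op (p.2, p.1)) (ξ p.2),
      fun p => isCP_appendState _ _ (G.cp _) (hξ _).1, ?_, ?_⟩, ?_, ?_⟩
    · intro p ρ hρ
      rw [htr]
      exact G.tni _ ρ hρ
    · intro ρ
      rw [← G.tp ρ]
      simp only [LinearMap.sum_apply, trace_sum, htr]
      rw [Fintype.sum_prod_type, Fintype.sum_prod_type, Finset.sum_comm]
    · intro y ρ _
      change ∑ x, ptraceL (G.op (y, x) ρ ⊗ₖ ξ y) = _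
      simp only [ptraceL_kronecker]
      rw [← Finset.sum_smul, hJ, ← hG2 y, Finset.sum_mul, trace_sum]
      simp only [trace_dualId_mul]
    · intro x ρ _
      change ∑ y, ptraceR (G.op (y, x) ρ ⊗ₖ ξ y) = _
      simp only [ptraceR_kronecker, (hξ _).2, one_smul]
      rw [← hG1 x, LinearMap.sum_apply]
  · rintro ⟨G, hG1, hG2⟩
    have htr : ∀ x y ρ, ((ptraceRLin ∘ₗ G.op (x, y)) ρ).trace = (G.op (x, y) ρ).trace :=
      fun x y ρ => trace_ptraceR _
    refine ⟨⟨fun p => ptraceRLin ∘ₗ G.op (p.2, p.1), fun p => isCP_ptraceR _ (G.cp _), ?_, ?_⟩,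
      ?_, ?_⟩
    · intro p ρ hρ
      rw [htr]
      exact G.tni _ ρ hρ
    · intro ρ
      rw [← G.tp ρ]
      simp only [LinearMap.sum_apply, trace_sum, htr]
      rw [Fintype.sum_prod_type, Fintype.sum_prod_type, Finset.sum_comm]
    · intro x
      apply matMap_eq_of_states
      intro ρ hρ
      rw [← hG2 x ρ hρ, LinearMap.sum_apply]
      rfl
    · intro y
      have hy : ∑ x, ptraceLLin ∘ₗ G.op (x, y) = J.op y := by
        apply matMap_eq_of_states
        intro ρ hρ
        rw [← hG1 y ρ hρ, LinearMap.sum_apply]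
        rfl
      ext i j
      have h1 := congrArg trace (LinearMap.congr_fun hy (single j i 1))
      rw [LinearMap.sum_apply, trace_sum, hJ, trace_smul, (hξ y).2, smul_eq_mul, mul_one] at h1
      have h2 : (B.elem y * single j i (1 : ℂ)).trace = B.elem y i j := by
        simp [trace_mul_single]
      rw [h2] at h1
      rw [← h1, Matrix.sum_apply]
      refine Finset.sum_congr rfl fun x _ => ?_
      change (ptraceR _).trace = (ptraceL _).trace
      rw [trace_ptraceR, trace_ptraceL]
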